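/- (Quasi-Mean Value Theorem) Let f : ℝ → ℝ be continuous on [a, b] (a < b) and specularly differentiable at every point of (a, b). Then there exist c₁, c₂ ∈ (a, b) such that f^S(c₂) ≤ (f(b) − f(a))/(b − a) ≤ f^S(c₁). -/

import Mathlib

open Filter Topology Set

/-- The combination function `A(α,β)` from the paper: the slope of the specular
tangent determined by one-sided slopes `α` (right) and `β` (left). -/
noncomputable def specA (α β : ℝ) : ℝ :=
  if α + β = 0 then 0
  else (α * β - 1 + Real.sqrt ((α ^ 2 + 1) * (β ^ 2 + 1))) / (α + β)

/-- `HasSpecData f x₀ L α β` means: the left and right limits of `f` at `x₀` both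
exist and are equal to `L`, the right specular derivative of `f` at `x₀` is `α`,
and the left specular derivative of `f` at `x₀` is `β`. -/
def HasSpecData (f : ℝ → ℝ) (x₀ L α β : ℝ) : Prop :=
  Tendsto f (𝓝[<] x₀) (𝓝 L) ∧ Tendsto f (𝓝[>] x₀) (𝓝 L) ∧
    Tendsto (fun x => (f x - L) / (x - x₀)) (𝓝[>] x₀) (𝓝 α) ∧
    Tendsto (fun x => (f x - L) / (x - x₀)) (𝓝[<] x₀) (𝓝 β)

/-- `f` is specularly differentiable at `x₀`. -/
def SpecDifferentiableAt (f : ℝ → ℝ) (x₀ : ℝ) : Prop :=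
  ∃ L α β, HasSpecData f x₀ L α β

/-- `f` is specularly differentiable at `x₀` with specular derivative `d`. -/
def HasSpecDerivAt (f : ℝ → ℝ) (x₀ d : ℝ) : Prop :=
  ∃ L α β, HasSpecData f x₀ L α β ∧ d = specA α β


theorem specA_ge {m α β : ℝ} (ha : m ≤ α) (hb : m ≤ β) : m ≤ specA α β := by
  unfold specA
  split_ifs with h
  · linarith
  rcases lt_or_gt_of_ne h with hs | hs
  · rw [le_div_iff_of_neg hs]
    rcases le_total α β with hab | hab
    · have hR : Real.sqrt ((α ^ 2 + 1) * (β ^ 2 + 1)) ≤ α ^ 2 + 1 := by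
        apply Real.sqrt_le_iff.2
        refine ⟨by positivity, ?_⟩
        rw [sq (α ^ 2 + 1)]
        apply mul_le_mul_of_nonneg_left _ (by positivity)
        nlinarith
      nlinarith
    · have hR : Real.sqrt ((α ^ 2 + 1) * (β ^ 2 + 1)) ≤ β ^ 2 + 1 := by
        apply Real.sqrt_le_iff.2
        refine ⟨by positivity, ?_⟩
        rw [sq (β ^ 2 + 1)]
        apply mul_le_mul_of_nonneg_right _ (by positivity)
        nlinarith
      nlinarith
  · rw [le_div_iff₀ hs]
    rcases le_total 0 m with hm | hm
    · have hR : m ^ 2 + 1 ≤ Real.sqrt ((α ^ 2 + 1) * (β ^ 2 + 1)) := by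
        apply Real.le_sqrt_of_sq_le
        rw [sq (m ^ 2 + 1)]
        apply mul_le_mul _ _ (by positivity) (by positivity)
        · gcongr
        · gcongr
      nlinarith [mul_nonneg (sub_nonneg.2 ha) (sub_nonneg.2 hb)]
    · have hR : 1 - α * β ≤ Real.sqrt ((α ^ 2 + 1) * (β ^ 2 + 1)) := by
        apply Real.le_sqrt_of_sq_le
        nlinarith [sq_nonneg (α + β)]
      nlinarith

theorem specA_neg (α β : ℝ) : specA (-α) (-β) = - specA α β := by
  unfold specA
  by_cases h : α + β = 0
  · rw [if_pos h, if_pos (by linarith)]; simp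
  · rw [if_neg h, if_neg (by intro h'; apply h; linarith)]
    rw [show -α + -β = -(α + β) by ring, div_neg]
    simp

theorem HasSpecData.neg' {f : ℝ → ℝ} {x L α β : ℝ} (h : HasSpecData f x L α β) :
    HasSpecData (fun y => - f y) x (-L) (-α) (-β) := by
  obtain ⟨h1, h2, h3, h4⟩ := h
  refine ⟨h1.neg, h2.neg, ?_, ?_⟩
  · refine h3.neg.congr fun y => ?_
    ring
  · refine h4.neg.congr fun y => ?_
    ring

theorem HasSpecDerivAt.neg' {f : ℝ → ℝ} {x d : ℝ} (h : HasSpecDerivAt f x d) :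
    HasSpecDerivAt (fun y => - f y) x (-d) := by
  obtain ⟨L, α, β, h, rfl⟩ := h
  exact ⟨_, _, _, h.neg', (specA_neg _ _).symm⟩

theorem HasSpecData.eq_of_cont {f : ℝ → ℝ} {a b c L α β : ℝ} (hc : c ∈ Ioo a b)
    (hcont : ContinuousOn f (Icc a b)) (h : HasSpecData f c L α β) : L = f c := by
  have h1 : ContinuousAt f c := hcont.continuousAt (Icc_mem_nhds hc.1 hc.2)
  exact tendsto_nhds_unique h.2.1 (h1.tendsto.mono_left nhdsWithin_le_nhds)

theorem core_up (f : ℝ → ℝ) (a b m : ℝ) (hab : a < b)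
    (hcont : ContinuousOn f (Icc a b))
    (hspec : ∀ x ∈ Ioo a b, SpecDifferentiableAt f x)
    (hm : f a - m * a < f b - m * b) :
    ∃ c ∈ Ioo a b, ∃ d, HasSpecDerivAt f c d ∧ m ≤ d := by
  obtain ⟨k, hk1, hk2⟩ := exists_between hm
  have hg : ContinuousOn (fun x => f x - m * x) (Icc a b) := hcont.sub (by fun_prop)
  set S : Set ℝ := {x | x ∈ Icc a b ∧ k < f x - m * x} with hS
  have hbS : b ∈ S := ⟨⟨hab.le, le_rfl⟩, hk2⟩
  have hbdd : BddBelow S := ⟨a, fun x hx => hx.1.1⟩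
  set c := sInf S with hc
  have hac : a ≤ c := le_csInf ⟨b, hbS⟩ fun x hx => hx.1.1
  have hcb : c ≤ b := csInf_le hbdd hbS
  have hleft : ∀ x ∈ Ico a c, f x - m * x ≤ k := by
    intro x hx
    by_contra! h
    exact absurd (csInf_le hbdd (show x ∈ S from ⟨⟨hx.1, hx.2.le.trans hcb⟩, h⟩)) (not_le.2 hx.2)
  have hge : k ≤ f c - m * c := by
    have hcl : IsClosed (Icc a b ∩ (fun x => f x - m * x) ⁻¹' Ici k) :=
      hg.preimage_isClosed_of_isClosed isClosed_Icc isClosed_Ici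
    have : closure S ⊆ Icc a b ∩ (fun x => f x - m * x) ⁻¹' Ici k :=
      closure_minimal (fun x hx => ⟨hx.1, hx.2.le⟩) hcl
    exact (this (csInf_mem_closure ⟨b, hbS⟩ hbdd)).2
  have hac' : a < c := by
    rcases hac.lt_or_eq with h | h
    · exact h
    · rw [← h] at hge; linarith
  have hle : f c - m * c ≤ k := by
    have hcl : IsClosed (Icc a b ∩ (fun x => f x - m * x) ⁻¹' Iic k) :=
      hg.preimage_isClosed_of_isClosed isClosed_Icc isClosed_Iic
    have : closure (Ico a c) ⊆ Icc a b ∩ (fun x => f x - m * x) ⁻¹' Iic k :=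
      closure_minimal (fun x hx => ⟨⟨hx.1, hx.2.le.trans hcb⟩, hleft x hx⟩) hcl
    rw [closure_Ico hac'.ne] at this
    exact (this ⟨hac, le_rfl⟩).2
  have hcb' : c < b := by
    rcases hcb.lt_or_eq with h | h
    · exact h
    · rw [h] at hle; linarith
  obtain ⟨L, α, β, hd⟩ := hspec c ⟨hac', hcb'⟩
  have hL := hd.eq_of_cont ⟨hac', hcb'⟩ hcont
  refine ⟨c, ⟨hac', hcb'⟩, _, ⟨L, α, β, hd, rfl⟩, specA_ge ?_ ?_⟩
  · refine ge_of_tendsto_of_frequently hd.2.2.1 ?_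
    intro hev
    obtain ⟨u, hu, hsub⟩ := mem_nhdsGT_iff_exists_Ioo_subset.1 hev
    obtain ⟨x, hx, hxu⟩ := exists_lt_of_csInf_lt ⟨b, hbS⟩ (show sInf S < u from hu)
    have hcx : c < x := by
      rcases (csInf_le hbdd hx).lt_or_eq with h | h
      · exact h
      · have := hx.2
        rw [← h] at this
        linarith
    apply hsub ⟨hcx, hxu⟩
    rw [le_div_iff₀ (by linarith)]
    have := hx.2
    rw [hL]; linarith
  · refine ge_of_tendsto hd.2.2.2 ?_
    filter_upwards [Ioo_mem_nhdsLT hac'] with x hx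
    rw [le_div_iff_of_neg (by linarith [hx.2])]
    have := hleft x ⟨hx.1.le, hx.2⟩
    rw [hL]; linarith

theorem core_down (f : ℝ → ℝ) (a b m : ℝ) (hab : a < b)
    (hcont : ContinuousOn f (Icc a b))
    (hspec : ∀ x ∈ Ioo a b, SpecDifferentiableAt f x)
    (hm : f b - m * b < f a - m * a) :
    ∃ c ∈ Ioo a b, ∃ d, HasSpecDerivAt f c d ∧ d ≤ m := by
  obtain ⟨c, hc, d, hd, hmd⟩ := core_up (fun y => - f y) a b (-m) hab hcont.neg
    (fun x hx => by
      obtain ⟨L, α, β, h⟩ := hspec x hx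
      exact ⟨_, _, _, h.neg'⟩) (by linarith)
  refine ⟨c, hc, -d, ?_, by linarith⟩
  simpa using hd.neg'

theorem quasi_mean_value (f : ℝ → ℝ) (a b : ℝ) (hab : a < b)
    (hcont : ContinuousOn f (Set.Icc a b))
    (hspec : ∀ x ∈ Set.Ioo a b, SpecDifferentiableAt f x) :
    ∃ c₁ ∈ Set.Ioo a b, ∃ c₂ ∈ Set.Ioo a b, ∃ d₁ d₂,
      HasSpecDerivAt f c₁ d₁ ∧ HasSpecDerivAt f c₂ d₂ ∧
        d₂ ≤ (f b - f a) / (b - a) ∧ (f b - f a) / (b - a) ≤ d₁ := by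
  set m := (f b - f a) / (b - a) with hm
  have hba : b - a ≠ 0 := by linarith
  have hmm : m * (b - a) = f b - f a := by rw [hm]; field_simp
  by_cases hconst : ∀ x ∈ Ioo a b, f x - m * x = f a - m * a
  · obtain ⟨c, hac, hcb⟩ := exists_between hab
    obtain ⟨L, α, β, hd⟩ := hspec c ⟨hac, hcb⟩
    have hL := hd.eq_of_cont ⟨hac, hcb⟩ hcont
    have h0 := hconst c ⟨hac, hcb⟩
    have hα : α = m := by
      refine tendsto_nhds_unique hd.2.2.1 (tendsto_const_nhds.congr' ?_)
      filter_upwards [Ioo_mem_nhdsGT hcb] with x hx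
      have := hconst x ⟨hac.trans hx.1, hx.2⟩
      rw [eq_div_iff (by linarith [hx.1]), hL]; linarith
    have hβ : β = m := by
      refine tendsto_nhds_unique hd.2.2.2 (tendsto_const_nhds.congr' ?_)
      filter_upwards [Ioo_mem_nhdsLT hac] with x hx
      have := hconst x ⟨hx.1, hx.2.trans hcb⟩
      rw [eq_div_iff (by linarith [hx.2]), hL]; linarith
    refine ⟨c, ⟨hac, hcb⟩, c, ⟨hac, hcb⟩, _, _, ⟨L, α, β, hd, rfl⟩, ⟨L, α, β, hd, rfl⟩, ?_, ?_⟩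
    · have := specA_ge (m := -m) (α := -α) (β := -β) (by linarith) (by linarith)
      rw [specA_neg] at this
      linarith
    · exact specA_ge hα.ge hβ.ge
  · push Not at hconst
    obtain ⟨x, hx, hne⟩ := hconst
    have c1 : ContinuousOn f (Icc a x) := hcont.mono (Icc_subset_Icc_right hx.2.le)
    have c2 : ContinuousOn f (Icc x b) := hcont.mono (Icc_subset_Icc_left hx.1.le)
    have s1 : Ioo a x ⊆ Ioo a b := Ioo_subset_Ioo_right hx.2.le
    have s2 : Ioo x b ⊆ Ioo a b := Ioo_subset_Ioo_left hx.1.le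
    rcases lt_or_gt_of_ne hne with h | h
    · obtain ⟨p, hp, d, hd, hd'⟩ := core_down f a x m hx.1 c1 (fun y hy => hspec y (s1 hy)) h
      obtain ⟨q, hq, e, he, he'⟩ := core_up f x b m hx.2 c2 (fun y hy => hspec y (s2 hy))
        (by linarith)
      exact ⟨q, s2 hq, p, s1 hp, e, d, he, hd, hd', he'⟩
    · obtain ⟨p, hp, d, hd, hd'⟩ := core_up f a x m hx.1 c1 (fun y hy => hspec y (s1 hy)) h
      obtain ⟨q, hq, e, he, he'⟩ := core_down f x b m hx.2 c2 (fun y hy => hspec y (s2 hy))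
        (by linarith)
      exact ⟨p, s1 hp, q, s2 hq, d, e, hd, he, he', hd'⟩
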